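/- The Fenchel–Legendre transform Λ* is a good rate function: it is lower semicontinuous on ℝ², and for every α ∈ [0,∞) the sublevel set {y ∈ ℝ² : Λ*(y) ≤ α} is compact. Moreover Λ* is strictly convex on its effective domain {y : Λ*(y) < ∞}. -/

import Mathlib

open MeasureTheory Set Filter Topology
open scoped ENNReal RealInnerProductSpace

noncomputable section

/-- The Euclidean plane. -/
abbrev E2 := EuclideanSpace ℝ (Fin 2)

/-- The uniform probability measure on a set `A` (normalized Lebesgue measure). -/
def uniformOn {α : Type*} [MeasureSpace α] (A : Set α) : Measure α :=
  (volume A)⁻¹ • volume.restrict A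

/-- The logarithmic moment generating function `Λ` of the uniform probability measure on the
open disk of radius `R` centered at the origin. -/
def logMGF (R : ℝ) (η : E2) : ℝ :=
  Real.log (∫ x, Real.exp (⟪x, η⟫) ∂(uniformOn (Metric.ball (0 : E2) R)))

/-- The Fenchel–Legendre transform `Λ*` of `logMGF R`, valued in `[0,∞]`.  Since the supremum
includes `η = 0` (where the value is `0`), truncating negative values does not change it. -/
def lambdaStar (R : ℝ) (y : E2) : ℝ≥0∞ :=
  ⨆ η : E2, ENNReal.ofReal (⟪y, η⟫ - logMGF R η)

section LogMGF

variable {R : ℝ}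

lemma isProbabilityMeasure_uniformOn_ball (hR : 0 < R) :
    IsProbabilityMeasure (uniformOn (Metric.ball (0 : E2) R)) := by
  constructor
  rw [uniformOn, Measure.smul_apply, Measure.restrict_apply_univ, smul_eq_mul]
  exact ENNReal.inv_mul_cancel (Metric.measure_ball_pos volume _ hR).ne' measure_ball_lt_top.ne

lemma ae_norm_lt_uniformOn_ball :
    ∀ᵐ x ∂(uniformOn (Metric.ball (0 : E2) R)), ‖x‖ < R := by
  refine Measure.ae_smul_measure ?_ _
  filter_upwards [ae_restrict_mem Metric.isOpen_ball.measurableSet] with x hx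
  simpa using hx

lemma integrable_exp_inner (hR : 0 < R) (η : E2) :
    Integrable (fun x : E2 => Real.exp ⟪x, η⟫) (uniformOn (Metric.ball (0 : E2) R)) := by
  have := isProbabilityMeasure_uniformOn_ball hR
  refine Integrable.of_bound (C := Real.exp (R * ‖η‖)) (by fun_prop) ?_
  filter_upwards [ae_norm_lt_uniformOn_ball] with x hx
  rw [Real.norm_of_nonneg (Real.exp_pos _).le]
  exact Real.exp_le_exp.2 ((real_inner_le_norm _ _).trans (by gcongr))

lemma exp_logMGF (hR : 0 < R) (η : E2) :
    Real.exp (logMGF R η) = ∫ x, Real.exp ⟪x, η⟫ ∂(uniformOn (Metric.ball (0 : E2) R)) := by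
  have := isProbabilityMeasure_uniformOn_ball hR
  exact Real.exp_log (integral_exp_pos (integrable_exp_inner hR η))

lemma logMGF_zero (hR : 0 < R) : logMGF R 0 = 0 := by
  have := isProbabilityMeasure_uniformOn_ball hR
  simp [logMGF]

lemma logMGF_le_add (hR : 0 < R) (η ζ : E2) :
    logMGF R η ≤ logMGF R ζ + R * ‖η - ζ‖ := by
  rw [← Real.exp_le_exp, Real.exp_add, exp_logMGF hR, exp_logMGF hR, ← integral_mul_const]
  refine integral_mono_ae (integrable_exp_inner hR η)
    ((integrable_exp_inner hR ζ).mul_const _) ?_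
  filter_upwards [ae_norm_lt_uniformOn_ball] with x hx
  rw [← Real.exp_add, Real.exp_le_exp]
  have h₁ : ⟪x, η - ζ⟫ ≤ R * ‖η - ζ‖ := (real_inner_le_norm _ _).trans (by gcongr)
  rw [inner_sub_right] at h₁
  linarith

lemma logMGF_le (hR : 0 < R) (η : E2) : logMGF R η ≤ R * ‖η‖ := by
  simpa [logMGF_zero hR] using logMGF_le_add hR η 0

lemma continuous_logMGF (hR : 0 < R) : Continuous (logMGF R) := by
  refine (LipschitzWith.of_le_add_mul ⟨R, hR.le⟩ fun η ζ => ?_).continuous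
  rw [dist_eq_norm]
  exact logMGF_le_add hR η ζ

lemma logMGF_add_add_logMGF_sub_le (hR : 0 < R) (η v : E2) :
    logMGF R (η + v) + logMGF R (η - v) ≤ 2 * logMGF R η + (R * ‖v‖) ^ 2 := by
  have hsum : Real.exp (logMGF R (η + v)) + Real.exp (logMGF R (η - v)) ≤
      2 * Real.exp (logMGF R η + (R * ‖v‖) ^ 2 / 2) := by
    rw [Real.exp_add, exp_logMGF hR, exp_logMGF hR, exp_logMGF hR,
      ← integral_add (integrable_exp_inner hR _) (integrable_exp_inner hR _),
      ← integral_mul_const, ← integral_const_mul]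
    refine integral_mono_ae ((integrable_exp_inner hR _).add (integrable_exp_inner hR _))
      (((integrable_exp_inner hR _).mul_const _).const_mul _) ?_
    filter_upwards [ae_norm_lt_uniformOn_ball] with x hx
    have hcosh : Real.cosh ⟪x, v⟫ ≤ Real.exp ((R * ‖v‖) ^ 2 / 2) := by
      refine (Real.cosh_le_exp_half_sq _).trans (Real.exp_le_exp.2 ?_)
      have h₁ : |⟪x, v⟫| ≤ R * ‖v‖ := (abs_real_inner_le_norm _ _).trans (by gcongr)
      have h₂ := sq_le_sq' (abs_le.1 h₁).1 (abs_le.1 h₁).2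
      linarith
    calc Real.exp ⟪x, η + v⟫ + Real.exp ⟪x, η - v⟫
        = 2 * (Real.exp ⟪x, η⟫ * Real.cosh ⟪x, v⟫) := by
          rw [inner_add_right, inner_sub_right, sub_eq_add_neg, Real.exp_add, Real.exp_add,
            Real.cosh_eq]
          ring
      _ ≤ _ := by gcongr
  have hmid : 2 * Real.exp ((logMGF R (η + v) + logMGF R (η - v)) / 2) ≤
      Real.exp (logMGF R (η + v)) + Real.exp (logMGF R (η - v)) := by
    have h := two_mul_le_add_sq (Real.exp (logMGF R (η + v) / 2))
      (Real.exp (logMGF R (η - v) / 2))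
    rw [mul_assoc, ← Real.exp_add, ← Real.exp_nat_mul, ← Real.exp_nat_mul] at h
    rw [Nat.cast_ofNat, mul_div_cancel₀ _ two_ne_zero, mul_div_cancel₀ _ two_ne_zero,
      ← add_div] at h
    exact h
  have h := hmid.trans hsum
  rw [mul_le_mul_iff_right₀ two_pos, Real.exp_le_exp] at h
  linarith

lemma exists_le_logMGF {r : ℝ} (hr : 0 ≤ r) (hrR : r < R) :
    ∃ C, ∀ η : E2, r * ‖η‖ - C ≤ logMGF R η := by
  have hR : 0 < R := hr.trans_lt hrR
  have := isProbabilityMeasure_uniformOn_ball hR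
  set μ := uniformOn (Metric.ball (0 : E2) R) with hμ
  set p := ((volume (Metric.ball (0 : E2) R))⁻¹ *
    volume (Metric.ball (0 : E2) ((R - r) / 2))).toReal with hp
  have hδ : 0 < (R - r) / 2 := by linarith
  have hp0 : 0 < p := by
    refine ENNReal.toReal_pos (mul_ne_zero ?_ ?_) (ENNReal.mul_ne_top ?_ ?_)
    · exact ENNReal.inv_ne_zero.2 measure_ball_lt_top.ne
    · exact (Metric.measure_ball_pos volume _ hδ).ne'
    · exact ENNReal.inv_ne_top.2 (Metric.measure_ball_pos volume _ hR).ne'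
    · exact measure_ball_lt_top.ne
  refine ⟨-Real.log p, fun η => ?_⟩
  set c : E2 := ((R + r) / 2) • (‖η‖⁻¹ • η) with hc
  set S := Metric.ball c ((R - r) / 2) with hS
  have hcn : ‖c‖ ≤ (R + r) / 2 := by
    rw [hc, norm_smul, norm_smul, norm_inv, norm_norm, Real.norm_of_nonneg (by linarith)]
    exact mul_le_of_le_one_right (by linarith) inv_mul_le_one
  have hcη : ⟪c, η⟫ = (R + r) / 2 * ‖η‖ := by
    rw [hc, real_inner_smul_left, real_inner_smul_left, real_inner_self_eq_norm_sq]
    rcases eq_or_ne η 0 with rfl | h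
    · simp
    · have : ‖η‖ ≠ 0 := norm_ne_zero_iff.2 h
      field_simp
  have hSR : S ⊆ Metric.ball 0 R := by
    refine Metric.ball_subset_ball' ?_
    rw [dist_zero_right]
    linarith
  have hμS : μ.real S = p := by
    rw [measureReal_def, hμ, uniformOn, Measure.smul_apply,
      Measure.restrict_apply Metric.isOpen_ball.measurableSet, inter_eq_left.2 hSR, smul_eq_mul,
      hS, Measure.addHaar_ball_center volume c]
  have hlow : ∀ x ∈ S, Real.exp (r * ‖η‖) ≤ Real.exp ⟪x, η⟫ := by
    intro x hx
    rw [Real.exp_le_exp]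
    have h₁ : -((R - r) / 2 * ‖η‖) ≤ ⟪x - c, η⟫ := by
      refine (abs_le.1 ((abs_real_inner_le_norm (x - c) η).trans ?_)).1
      gcongr
      exact (mem_ball_iff_norm.1 hx).le
    rw [inner_sub_left, hcη] at h₁
    linarith
  have hint : p * Real.exp (r * ‖η‖) ≤ Real.exp (logMGF R η) := by
    rw [exp_logMGF hR, ← hμS]
    calc μ.real S * Real.exp (r * ‖η‖) = ∫ _ in S, Real.exp (r * ‖η‖) ∂μ := by
          rw [setIntegral_const, smul_eq_mul]
      _ ≤ ∫ x in S, Real.exp ⟪x, η⟫ ∂μ :=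
          setIntegral_mono_on (integrable_const _).integrableOn
            (integrable_exp_inner hR η).integrableOn Metric.isOpen_ball.measurableSet hlow
      _ ≤ ∫ x, Real.exp ⟪x, η⟫ ∂μ :=
          setIntegral_le_integral (integrable_exp_inner hR η)
            (Eventually.of_forall fun x => (Real.exp_pos _).le)
  rw [← Real.exp_log hp0, ← Real.exp_add, Real.exp_le_exp] at hint
  linarith

lemma eq_of_isMaxOn_inner_sub_logMGF (hR : 0 < R) {y₁ y₂ η : E2}
    (h₁ : ∀ ζ, ⟪y₁, ζ⟫ - logMGF R ζ ≤ ⟪y₁, η⟫ - logMGF R η)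
    (h₂ : ∀ ζ, ⟪y₂, ζ⟫ - logMGF R ζ ≤ ⟪y₂, η⟫ - logMGF R η) : y₁ = y₂ := by
  by_contra hne
  have hv : 0 < ‖y₁ - y₂‖ ^ 2 := by
    have := norm_pos_iff.2 (sub_ne_zero.2 hne)
    positivity
  set t : ℝ := 1 / (2 * R ^ 2) with ht
  have ht0 : 0 < t := by positivity
  have h₁' := h₁ (η + t • (y₁ - y₂))
  have h₂' := h₂ (η - t • (y₁ - y₂))
  have h₃ := logMGF_add_add_logMGF_sub_le hR η (t • (y₁ - y₂))
  rw [inner_add_right, inner_smul_right] at h₁'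
  rw [inner_sub_right, inner_smul_right] at h₂'
  rw [norm_smul, Real.norm_of_nonneg ht0.le] at h₃
  have h₄ : ⟪y₁, y₁ - y₂⟫ - ⟪y₂, y₁ - y₂⟫ = ‖y₁ - y₂‖ ^ 2 := by
    rw [← inner_sub_left, real_inner_self_eq_norm_sq]
  have h₅ : (R * (t * ‖y₁ - y₂‖)) ^ 2 = t * ‖y₁ - y₂‖ ^ 2 / 2 := by
    rw [ht]; field_simp
  have h₆ : t * ⟪y₁, y₁ - y₂⟫ - t * ⟪y₂, y₁ - y₂⟫ = t * ‖y₁ - y₂‖ ^ 2 := by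
    rw [← h₄]; ring
  have h₇ : 0 < t * ‖y₁ - y₂‖ ^ 2 := by positivity
  linarith

lemma exists_isMaxOn_inner_sub_logMGF {y : E2} (hy : ‖y‖ < R) :
    ∃ η, ∀ ζ, ⟪y, ζ⟫ - logMGF R ζ ≤ ⟪y, η⟫ - logMGF R η := by
  have hR : 0 < R := (norm_nonneg y).trans_lt hy
  obtain ⟨r, hyr, hrR⟩ := exists_between hy
  obtain ⟨C, hC⟩ := exists_le_logMGF ((norm_nonneg y).trans hyr.le) hrR
  have hcont : Continuous fun ζ : E2 => logMGF R ζ - ⟪y, ζ⟫ :=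
    (continuous_logMGF hR).sub (by fun_prop)
  have hlim : Tendsto (fun ζ : E2 => logMGF R ζ - ⟪y, ζ⟫) (cocompact E2) atTop := by
    refine tendsto_atTop_mono (f := fun ζ : E2 => (r - ‖y‖) * ‖ζ‖ - C) (fun ζ => ?_) ?_
    · have := hC ζ
      have := real_inner_le_norm y ζ
      linarith
    · exact tendsto_atTop_add_const_right _ _
        ((tendsto_norm_cocompact_atTop (E := E2)).const_mul_atTop (sub_pos.2 hyr))
  obtain ⟨η, hη⟩ := hcont.exists_forall_le hlim
  exact ⟨η, fun ζ => by linarith [hη ζ]⟩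

end LogMGF

section LambdaStar

variable {R : ℝ}

lemma lowerSemicontinuous_lambdaStar : LowerSemicontinuous (lambdaStar R) :=
  lowerSemicontinuous_iSup fun η => Continuous.lowerSemicontinuous <|
    ENNReal.continuous_ofReal.comp (by fun_prop)

lemma inner_sub_logMGF_le_toReal {y : E2} (hy : lambdaStar R y < ⊤) (η : E2) :
    ⟪y, η⟫ - logMGF R η ≤ (lambdaStar R y).toReal :=
  (ENNReal.ofReal_le_iff_le_toReal hy.ne).1
    (le_iSup (fun η : E2 => ENNReal.ofReal (⟪y, η⟫ - logMGF R η)) η)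

lemma norm_le_of_lambdaStar_lt_top (hR : 0 < R) {y : E2} (hy : lambdaStar R y < ⊤) :
    ‖y‖ ≤ R := by
  by_contra! h
  have hy0 : 0 < ‖y‖ := hR.trans h
  have hk : 0 < ‖y‖ * (‖y‖ - R) := mul_pos hy0 (sub_pos.2 h)
  obtain ⟨n, hn⟩ := exists_nat_gt ((lambdaStar R y).toReal / (‖y‖ * (‖y‖ - R)))
  rw [div_lt_iff₀ hk] at hn
  have h₁ := inner_sub_logMGF_le_toReal hy ((n : ℝ) • y)
  have h₂ := logMGF_le hR ((n : ℝ) • y)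
  rw [norm_smul, Real.norm_of_nonneg n.cast_nonneg] at h₂
  rw [inner_smul_right, real_inner_self_eq_norm_sq] at h₁
  nlinarith

lemma lambdaStar_eq_ofReal {y η : E2}
    (h : ∀ ζ, ⟪y, ζ⟫ - logMGF R ζ ≤ ⟪y, η⟫ - logMGF R η) :
    lambdaStar R y = ENNReal.ofReal (⟪y, η⟫ - logMGF R η) :=
  le_antisymm (iSup_le fun ζ => ENNReal.ofReal_le_ofReal (h ζ))
    (le_iSup (fun η : E2 => ENNReal.ofReal (⟪y, η⟫ - logMGF R η)) η)

lemma lambdaStar_lt_of_ne (hR : 0 < R) {y₁ y₂ : E2} (hy₁ : lambdaStar R y₁ < ⊤)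
    (hy₂ : lambdaStar R y₂ < ⊤) (hne : y₁ ≠ y₂) {a b : ℝ} (ha : 0 < a) (hb : 0 < b)
    (hab : a + b = 1) :
    lambdaStar R (a • y₁ + b • y₂) <
      ENNReal.ofReal a * lambdaStar R y₁ + ENNReal.ofReal b * lambdaStar R y₂ := by
  have hy : ‖a • y₁ + b • y₂‖ < R :=
    norm_combo_lt_of_ne (norm_le_of_lambdaStar_lt_top hR hy₁)
      (norm_le_of_lambdaStar_lt_top hR hy₂) hne ha hb hab
  obtain ⟨η, hη⟩ := exists_isMaxOn_inner_sub_logMGF hy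
  have hη0 : 0 ≤ ⟪a • y₁ + b • y₂, η⟫ - logMGF R η := by
    simpa [logMGF_zero hR] using hη 0
  have hsplit : ⟪a • y₁ + b • y₂, η⟫ - logMGF R η =
      a * (⟪y₁, η⟫ - logMGF R η) + b * (⟪y₂, η⟫ - logMGF R η) := by
    rw [inner_add_left, real_inner_smul_left, real_inner_smul_left]
    linear_combination logMGF R η * hab
  have hlt : ⟪a • y₁ + b • y₂, η⟫ - logMGF R η <
      a * (lambdaStar R y₁).toReal + b * (lambdaStar R y₂).toReal := by
    rw [hsplit]
    have h₁ := inner_sub_logMGF_le_toReal hy₁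
    have h₂ := inner_sub_logMGF_le_toReal hy₂
    rcases (h₁ η).lt_or_eq with h | h
    · exact add_lt_add_of_lt_of_le (mul_lt_mul_of_pos_left h ha)
        (mul_le_mul_of_nonneg_left (h₂ η) hb.le)
    rcases (h₂ η).lt_or_eq with h' | h'
    · exact add_lt_add_of_le_of_lt (mul_le_mul_of_nonneg_left (h₁ η) ha.le)
        (mul_lt_mul_of_pos_left h' hb)
    exact absurd (eq_of_isMaxOn_inner_sub_logMGF hR (h ▸ h₁) (h' ▸ h₂)) hne
  rw [lambdaStar_eq_ofReal hη, ← ENNReal.ofReal_toReal hy₁.ne, ← ENNReal.ofReal_toReal hy₂.ne,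
    ← ENNReal.ofReal_mul ha.le, ← ENNReal.ofReal_mul hb.le,
    ← ENNReal.ofReal_add (by positivity) (by positivity)]
  exact (ENNReal.ofReal_lt_ofReal_iff (hη0.trans_lt hlt)).2 hlt

end LambdaStar

/-- `Λ*` is a good rate function: lower semicontinuous with compact sublevel
sets; moreover it is strictly convex on its effective domain. -/
theorem statement2 (R : ℝ) (hR : 0 < R) :
    LowerSemicontinuous (lambdaStar R) ∧
    (∀ α : ℝ, 0 ≤ α → IsCompact {y : E2 | lambdaStar R y ≤ ENNReal.ofReal α}) ∧
    (∀ y₁ y₂ : E2, lambdaStar R y₁ < ⊤ → lambdaStar R y₂ < ⊤ → y₁ ≠ y₂ →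
      ∀ a b : ℝ, 0 < a → 0 < b → a + b = 1 →
        lambdaStar R (a • y₁ + b • y₂) <
          ENNReal.ofReal a * lambdaStar R y₁ + ENNReal.ofReal b * lambdaStar R y₂) := by
  refine ⟨lowerSemicontinuous_lambdaStar, fun α _ => ?_,
    fun y₁ y₂ hy₁ hy₂ hne a b ha hb hab => lambdaStar_lt_of_ne hR hy₁ hy₂ hne ha hb hab⟩
  refine (isCompact_closedBall (0 : E2) R).of_isClosed_subset
    (lowerSemicontinuous_lambdaStar.isClosed_preimage _) fun y hy => ?_
  rw [mem_closedBall_zero_iff]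
  exact norm_le_of_lambdaStar_lt_top hR (lt_of_le_of_lt hy ENNReal.ofReal_lt_top)
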